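/- Let D be a unique factorization domain admitting a prime element p with D/pD finite. Then Int(D) is not a unique factorization domain; indeed, for every positive integer k and all integers 1 < n_1 ≤ ... ≤ n_k there exists H ∈ Int(D) with exactly k essentially different factorizations into irreducibles of Int(D), of lengths exactly n_1, ..., n_k. -/

import Mathlib

open Polynomial

/-- The ring of integer-valued polynomials `Int(D) ⊆ K[X]`. -/
noncomputable def IntPolySubring (D K : Type*) [CommRing D] [CommRing K] [Algebra D K] :
    Subring (Polynomial K) :=
  ⨅ a : D, Subring.comap (Polynomial.evalRingHom (algebraMap D K a)) (algebraMap D K).range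

section Irreducibility

theorem Polynomial.reverse_reverse_of_coeff_zero_ne_zero {R : Type*} [Semiring R] {f : R[X]}
    (h : f.coeff 0 ≠ 0) : f.reverse.reverse = f := by
  have ht : f.natTrailingDegree = 0 := natTrailingDegree_eq_zero.2 (Or.inr h)
  have hd : f.reverse.natDegree = f.natDegree := by rw [reverse_natDegree, ht, Nat.sub_zero]
  rw [reverse, hd, reverse]
  ext n
  rw [coeff_reflect, coeff_reflect, revAt_invol]

theorem Polynomial.natDegree_eq_zero_of_natDegree_reverse_eq_zero {R : Type*} [Semiring R]
    {f : R[X]} (h : f.coeff 0 ≠ 0) (hr : f.reverse.natDegree = 0) : f.natDegree = 0 := by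
  have ht : f.natTrailingDegree = 0 := natTrailingDegree_eq_zero.2 (Or.inr h)
  rwa [reverse_natDegree, ht, Nat.sub_zero] at hr

theorem Irreducible.polynomial_reverse {K : Type*} [Field K] {f : K[X]} (hf : Irreducible f)
    (h : f.coeff 0 ≠ 0) : Irreducible f.reverse := by
  have hf0 : f ≠ 0 := hf.ne_zero
  have isUnit_of_reverse {a : K[X]} (ha : a.coeff 0 ≠ 0) (hu : IsUnit a.reverse) : IsUnit a := by
    have hd := natDegree_eq_zero_of_natDegree_reverse_eq_zero ha (natDegree_eq_zero_of_isUnit hu)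
    rw [eq_C_of_natDegree_eq_zero hd]
    exact isUnit_C.2 (isUnit_iff_ne_zero.2 ha)
  constructor
  · intro hu
    refine hf.not_isUnit (isUnit_of_reverse h hu)
  · intro a b hab
    have h0 : a.coeff 0 * b.coeff 0 ≠ 0 := by
      rw [← mul_coeff_zero, ← hab, coeff_zero_reverse]
      exact leadingCoeff_ne_zero.2 hf0
    have hfab : f = a.reverse * b.reverse := by
      rw [← reverse_mul_of_domain, ← hab, reverse_reverse_of_coeff_zero_ne_zero h]
    exact (hf.isUnit_or_isUnit hfab).imp (isUnit_of_reverse (left_ne_zero_of_mul h0))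
      (isUnit_of_reverse (right_ne_zero_of_mul h0))

theorem neg_pow_add_prime_pow_ne_zero {D : Type*} [CommRing D] {p : D} (hp : Prime p) {m d : ℕ}
    (hd : 0 < d) {a : D} (ha : ¬ p ∣ a) : (-a) ^ m + p ^ d ≠ 0 := by
  intro h0
  have : p ∣ (-a) ^ m := by
    rw [eq_neg_of_add_eq_zero_left h0, dvd_neg]
    exact dvd_pow_self p hd.ne'
  exact ha (dvd_neg.1 (hp.dvd_of_dvd_pow this))

variable {D K : Type*} [CommRing D] [IsDomain D] [UniqueFactorizationMonoid D]
  [Field K] [Algebra D K] [IsFractionRing D K] {p : D}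

theorem irreducible_X_pow_add_C_prime_pow (hp : Prime p) {m d : ℕ} (hm : m.Prime) (hd : 0 < d)
    (hdm : d < m) : Irreducible (X ^ m + C (algebraMap D K (p ^ d))) := by
  have key : Irreducible (X ^ m - C (algebraMap D K (-p ^ d))) := by
    refine X_pow_sub_C_irreducible_of_prime hm fun b hb => ?_
    obtain ⟨y, rfl⟩ := IsIntegrallyClosed.exists_algebraMap_eq_of_isIntegral_pow (R := D) hm.pos
      (hb ▸ isIntegral_algebraMap)
    rw [← map_pow] at hb
    have hy : y ^ m = -p ^ d := IsFractionRing.injective D K hb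
    have hpy : p ∣ y := hp.dvd_of_dvd_pow (n := m) (by
      rw [hy, dvd_neg]; exact dvd_pow_self p hd.ne')
    have h1 : p ^ m ∣ p ^ d := by
      rw [← dvd_neg, ← hy]; exact pow_dvd_pow_of_dvd hpy m
    exact absurd ((pow_dvd_pow_iff hp.ne_zero hp.not_isUnit).1 h1) (not_le.2 hdm)
  simpa using key

theorem natDegree_X_sub_C_pow_add_C {R : Type*} [CommRing R] [Nontrivial R] (a c : R) {m : ℕ} :
    ((X - C a) ^ m + C c).natDegree = m := by
  rw [natDegree_add_C, (monic_X_sub_C a).natDegree_pow, natDegree_X_sub_C, mul_one]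

theorem reverse_X_sub_C_pow_add_C {R : Type*} [CommRing R] [IsDomain R] (a c : R) (m : ℕ) :
    ((X - C a) ^ m + C c).reverse = (1 - C a * X) ^ m + C c * X ^ m := by
  have h1 : (X - C a).reverse = 1 - C a * X := by
    rw [reverse, natDegree_X_sub_C, reflect_sub, reflect_C, pow_one]
    congr 1
    simp
  have h2 (n : ℕ) : ((X - C a) ^ n).reverse = (1 - C a * X) ^ n := by
    induction n with
    | zero => simp [reverse]
    | succ n ih => rw [pow_succ, reverse_mul_of_domain, ih, h1, pow_succ]
  have h3 : ((X - C a) ^ m).natDegree = m := by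
    rw [(monic_X_sub_C a).natDegree_pow, natDegree_X_sub_C, mul_one]
  have h4 := h2 m
  rw [reverse, h3] at h4
  rw [reverse, natDegree_X_sub_C_pow_add_C, reflect_add, reflect_C, h4]

theorem irreducible_one_sub_C_mul_X_pow_add (hp : Prime p) {m d : ℕ} (hm : m.Prime) (hd : 0 < d)
    (hdm : d < m) {a : D} (ha : ¬ p ∣ a) :
    Irreducible (((1 - C a * X) ^ m + C (p ^ d) * X ^ m).map (algebraMap D K)) := by
  have h1 : ((1 - C a * X) ^ m + C (p ^ d) * X ^ m).map (algebraMap D K) =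
      ((X - C (algebraMap D K a)) ^ m + C (algebraMap D K (p ^ d))).reverse := by
    rw [reverse_X_sub_C_pow_add_C]; simp
  rw [h1]
  apply Irreducible.polynomial_reverse
  · have h2 := irreducible_X_pow_add_C_prime_pow (K := K) hp hm hd hdm
    rw [← MulEquiv.irreducible_iff (taylorEquiv (-algebraMap D K a))] at h2
    change Irreducible (taylor (-algebraMap D K a) _) at h2
    simpa [sub_eq_add_neg] using h2
  · have : ((X - C (algebraMap D K a)) ^ m + C (algebraMap D K (p ^ d))).coeff 0
        = algebraMap D K ((-a) ^ m + p ^ d) := by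
      simp [coeff_zero_eq_eval_zero]
    rw [this]
    exact fun h => neg_pow_add_prime_pow_ne_zero hp hd ha
      (IsFractionRing.injective D K (by simpa using h))

theorem natDegree_one_sub_C_mul_X_pow_add {D : Type*} [CommRing D] [IsDomain D] {p : D}
    (hp : Prime p) {m d : ℕ} (hd : 0 < d) {a : D} (ha : ¬ p ∣ a) :
    ((1 - C a * X) ^ m + C (p ^ d) * X ^ m).natDegree = m := by
  have h0 : ((X - C a) ^ m + C (p ^ d)).coeff 0 ≠ 0 := by
    simpa [coeff_zero_eq_eval_zero] using neg_pow_add_prime_pow_ne_zero (m := m) hp hd ha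
  rw [← reverse_X_sub_C_pow_add_C, reverse_natDegree, natDegree_X_sub_C_pow_add_C,
    natTrailingDegree_eq_zero.2 (Or.inr h0), Nat.sub_zero]

end Irreducibility

section IntegerValued

variable {D K : Type*} [CommRing D]

theorem mem_IntPolySubring [CommRing K] [Algebra D K] {f : K[X]} :
    f ∈ IntPolySubring D K ↔ ∀ a : D, ∃ x : D, algebraMap D K x = f.eval (algebraMap D K a) := by
  simp [IntPolySubring, Subring.mem_iInf]

theorem natDegree_eq_zero_of_isUnit_intPoly [Field K] [Algebra D K] {g : IntPolySubring D K}
    (hg : IsUnit g) : (g : K[X]).natDegree = 0 :=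
  natDegree_eq_zero_of_isUnit (hg.map (IntPolySubring D K).subtype)

theorem natDegree_eq_of_associated_intPoly [Field K] [Algebra D K] {g h : IntPolySubring D K}
    (hgh : Associated g h) : (g : K[X]).natDegree = (h : K[X]).natDegree :=
  natDegree_eq_of_degree_eq (degree_eq_degree_of_associated
    (hgh.map (IntPolySubring D K).subtype))

theorem associated_intPoly_of_eq_C_mul [Field K] [Algebra D K] {g h : IntPolySubring D K}
    {u v : D} (huv : u * v = 1) (hg : (g : K[X]) = C (algebraMap D K u) * h) :
    Associated g h := by
  have hmem (w : D) : C (algebraMap D K w) ∈ IntPolySubring D K :=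
    mem_IntPolySubring.2 fun a => ⟨w, by simp⟩
  refine Associated.symm ⟨⟨⟨_, hmem u⟩, ⟨_, hmem v⟩, ?_, ?_⟩, ?_⟩
  · ext1; simp [← map_mul, huv]
  · ext1; simp [← map_mul, mul_comm v u, huv]
  · ext1; simp [hg, mul_comm]

variable [IsDomain D] [UniqueFactorizationMonoid D] [Field K] [Algebra D K] [IsFractionRing D K]

/-- A fraction is integral once it has a multiple by a divisor of a power of `p` and a multiple
by an element prime to `p` which are integral. -/
theorem exists_algebraMap_eq_of_mul_mem {p : D} (hp : Prime p) {c : K} {u w : D} {N : ℕ}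
    (hu : u ∣ p ^ N) (hw : ¬ p ∣ w) (hcu : ∃ x, algebraMap D K x = c * algebraMap D K u)
    (hcw : ∃ x, algebraMap D K x = c * algebraMap D K w) : ∃ x, algebraMap D K x = c := by
  obtain ⟨a, ⟨b, hb⟩, hrel, rfl⟩ := IsFractionRing.exists_reduced_fraction (A := D) (K := K) c
  have dvd_of (t : D) (h : ∃ x, algebraMap D K x =
      IsLocalization.mk' K a (⟨b, hb⟩ : nonZeroDivisors D) * algebraMap D K t) : b ∣ t := by
    obtain ⟨x, hx⟩ := h
    have hb0 : algebraMap D K b ≠ 0 := by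
      simpa using nonZeroDivisors.ne_zero hb
    rw [IsFractionRing.mk'_eq_div, div_mul_eq_mul_div, eq_div_iff hb0, ← map_mul, ← map_mul] at hx
    have hx' := IsFractionRing.injective D K hx
    exact hrel.symm.dvd_of_dvd_mul_left ⟨x, by rw [← hx', mul_comm]⟩
  have hbu : b ∣ p ^ N := (dvd_of u hcu).trans hu
  have hbw := dvd_of w hcw
  obtain ⟨i, -, hi⟩ := (dvd_prime_pow hp N).1 hbu
  have hi0 : i = 0 := by
    by_contra h
    exact hw ((dvd_pow_self p h).trans (hi.symm.dvd.trans hbw))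
  subst hi0
  obtain ⟨v, hv⟩ : IsUnit b := isUnit_of_dvd_one (by simpa using hi.dvd)
  refine ⟨a * ↑v⁻¹, ?_⟩
  rw [IsLocalization.eq_mk'_iff_mul_eq, ← map_mul]
  simp [← hv]

end IntegerValued

/-- A family of polynomials over `D`, irreducible over `K`, whose values at `0` divide powers of
`p` and whose values at `1` are prime to `p`, apart from one member whose value at `1` is not
divisible by `p ^ (e + 1)`. -/
structure PrimeValueFamily (D K : Type*) [CommRing D] [Field K] [Algebra D K] (p : D) (e : ℕ)
    (ι : Type*) where
  /-- The members of the family. -/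
  poly : ι → D[X]
  /-- The distinguished index. -/
  base : ι
  irreducible_map : ∀ i, Irreducible ((poly i).map (algebraMap D K))
  eval_zero_dvd : ∀ i, ∃ N, (poly i).eval 0 ∣ p ^ N
  not_dvd_eval_one : ∀ i, i ≠ base → ¬ p ∣ (poly i).eval 1
  not_pow_dvd_eval_one : ¬ p ^ (e + 1) ∣ (poly base).eval 1

namespace PrimeValueFamily

variable {D K : Type*} [CommRing D] [Field K] [Algebra D K] {p : D} {e : ℕ} {ι : Type*}

/-- The product of the members indexed by `T` has all its values divisible by `p ^ e`. -/
def Full (F : PrimeValueFamily D K p e ι) (T : Finset ι) : Prop :=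
  ∀ b : D, p ^ e ∣ (∏ i ∈ T, F.poly i).eval b

open Classical in
/-- The factor by which the product over `T` is scaled: `p ^ (-e)` when `T` is full, else `1`. -/
noncomputable def scale (F : PrimeValueFamily D K p e ι) (T : Finset ι) : K :=
  if F.Full T then (algebraMap D K (p ^ e))⁻¹ else 1

variable (F : PrimeValueFamily D K p e ι)

theorem Full.mono {F : PrimeValueFamily D K p e ι} {T U : Finset ι} (hT : F.Full T) (h : T ⊆ U) :
    F.Full U := fun b => (hT b).trans (by
  simpa [eval_prod] using Finset.prod_dvd_prod_of_subset T U (fun i => (F.poly i).eval b) h)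

theorem scale_of_full {T : Finset ι} (h : F.Full T) :
    F.scale T = (algebraMap D K (p ^ e))⁻¹ := if_pos h

theorem scale_of_not_full {T : Finset ι} (h : ¬ F.Full T) : F.scale T = 1 := if_neg h

theorem exists_eval_zero_dvd (T : Finset ι) : ∃ N, (∏ i ∈ T, F.poly i).eval 0 ∣ p ^ N := by
  choose N hN using F.eval_zero_dvd
  refine ⟨∑ i ∈ T, N i, ?_⟩
  rw [eval_prod, ← Finset.prod_pow_eq_pow_sum]
  exact Finset.prod_dvd_prod_of_dvd _ _ fun i _ => hN i

theorem not_dvd_eval_one_of_base_notMem (hp : Prime p) {T : Finset ι} (h : F.base ∉ T) :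
    ¬ p ∣ (∏ i ∈ T, F.poly i).eval 1 := by
  rw [eval_prod, hp.dvd_finsetProd_iff]
  rintro ⟨i, hi, hd⟩
  exact F.not_dvd_eval_one i (fun hb => h (hb ▸ hi)) hd

theorem Full.base_mem {F : PrimeValueFamily D K p e ι} (hp : Prime p) (he : 0 < e) {T : Finset ι}
    (h : F.Full T) : F.base ∈ T := by
  by_contra hb
  exact F.not_dvd_eval_one_of_base_notMem hp hb ((dvd_pow_self p he.ne').trans (h 1))

theorem not_full_of_base_notMem (hp : Prime p) (he : 0 < e) {T : Finset ι} (h : F.base ∉ T) :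
    ¬ F.Full T := fun hT => h (hT.base_mem hp he)

theorem exists_eval_eq (c : K) (T : Finset ι) {g : IntPolySubring D K}
    (hg : (g : K[X]) = C c * (∏ i ∈ T, F.poly i).map (algebraMap D K)) (b : D) :
    ∃ x, algebraMap D K x = c * algebraMap D K ((∏ i ∈ T, F.poly i).eval b) := by
  have := mem_IntPolySubring.1 g.2 b
  rwa [hg, eval_mul, eval_C, eval_map_algebraMap,
    aeval_algebraMap_apply_eq_algebraMap_eval] at this

theorem not_pow_dvd_eval_one_prod [IsDomain D] (hp : Prime p) (T : Finset ι) :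
    ¬ p ^ (e + 1) ∣ (∏ i ∈ T, F.poly i).eval 1 := by
  classical
  intro hd
  by_cases h : F.base ∈ T
  · rw [← Finset.mul_prod_erase T _ h, eval_mul] at hd
    exact F.not_pow_dvd_eval_one (hp.pow_dvd_of_dvd_mul_right _
      (F.not_dvd_eval_one_of_base_notMem hp (Finset.notMem_erase _ _)) hd)
  · exact F.not_dvd_eval_one_of_base_notMem hp h ((dvd_pow_self p e.succ_ne_zero).trans hd)

variable [IsFractionRing D K]

theorem natDegree_poly_pos (i : ι) : 0 < (F.poly i).natDegree := by
  rw [← natDegree_map_eq_of_injective (IsFractionRing.injective D K)]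
  exact (F.irreducible_map i).natDegree_pos

theorem C_scale_mul_mem (hp : Prime p) (T : Finset ι) :
    C (F.scale T) * (∏ i ∈ T, F.poly i).map (algebraMap D K) ∈ IntPolySubring D K := by
  refine mem_IntPolySubring.2 fun b => ?_
  rw [eval_mul, eval_C, eval_map_algebraMap, aeval_algebraMap_apply_eq_algebraMap_eval]
  by_cases h : F.Full T
  · obtain ⟨x, hx⟩ := h b
    have h0 : algebraMap D K (p ^ e) ≠ 0 := by simp [hp.ne_zero]
    exact ⟨x, by rw [F.scale_of_full h, hx, map_mul, inv_mul_cancel_left₀ h0]⟩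
  · exact ⟨_, by rw [F.scale_of_not_full h, one_mul]⟩

theorem scale_ne_zero (hp : Prime p) (T : Finset ι) : F.scale T ≠ 0 := by
  by_cases h : F.Full T
  · rw [F.scale_of_full h]; simp [hp.ne_zero]
  · rw [F.scale_of_not_full h]; exact one_ne_zero

/-- The product over `T`, divided by `p ^ e` when possible, as an element of `Int(D)`. -/
noncomputable def elt (hp : Prime p) (T : Finset ι) : IntPolySubring D K :=
  ⟨_, F.C_scale_mul_mem hp T⟩

theorem coe_elt (hp : Prime p) (T : Finset ι) : (F.elt hp T : K[X]) =
    C (F.scale T) * (∏ i ∈ T, F.poly i).map (algebraMap D K) := rfl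

theorem elt_empty (hp : Prime p) (he : 0 < e) : F.elt hp ∅ = 1 := by
  ext1
  rw [coe_elt, F.scale_of_not_full (F.not_full_of_base_notMem hp he (Finset.notMem_empty _))]
  simp

theorem elt_mul_elt [DecidableEq ι] (hp : Prime p) (he : 0 < e) {T V : Finset ι}
    (hd : Disjoint T V) (hV : F.base ∉ V) (hT : F.Full T ∨ F.base ∉ T) :
    F.elt hp T * F.elt hp V = F.elt hp (T ∪ V) := by
  have hscale : F.scale (T ∪ V) = F.scale T := by
    rcases hT with hT | hT
    · rw [F.scale_of_full hT, F.scale_of_full (hT.mono Finset.subset_union_left)]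
    · rw [F.scale_of_not_full (F.not_full_of_base_notMem hp he hT),
        F.scale_of_not_full (F.not_full_of_base_notMem hp he (by simp [hT, hV]))]
  ext1
  rw [Subring.coe_mul, coe_elt, coe_elt, coe_elt, hscale, Finset.prod_union hd, Polynomial.map_mul,
    F.scale_of_not_full (F.not_full_of_base_notMem hp he hV), C_1, one_mul, mul_assoc]

/-- The factorization of `F.elt hp U` attached to a subset `T` of `U`. -/
noncomputable def factorization [DecidableEq ι] (hp : Prime p) (U T : Finset ι) :
    Multiset (IntPolySubring D K) :=
  F.elt hp T ::ₘ (U \ T).val.map fun i => F.elt hp {i}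

theorem prod_map_elt_singleton (hp : Prime p) (he : 0 < e) {T : Finset ι} (hT : F.base ∉ T) :
    (T.val.map fun i => F.elt hp {i}).prod = F.elt hp T := by
  classical
  change ∏ i ∈ T, F.elt hp {i} = F.elt hp T
  induction T using Finset.induction with
  | empty => rw [Finset.prod_empty, F.elt_empty hp he]
  | insert i T hi ih =>
    rw [Finset.mem_insert, not_or] at hT
    rw [Finset.prod_insert hi, ih hT.2, F.elt_mul_elt hp he (by simpa using hi) hT.2
      (Or.inr (by simpa using hT.1)), Finset.insert_eq]

theorem prod_factorization [DecidableEq ι] (hp : Prime p) (he : 0 < e) {U T : Finset ι}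
    (hT : F.Full T) (hTU : T ⊆ U) : (F.factorization hp U T).prod = F.elt hp U := by
  have hb : F.base ∉ U \ T := by simp [hT.base_mem hp he]
  rw [factorization, Multiset.prod_cons, F.prod_map_elt_singleton hp he hb,
    F.elt_mul_elt hp he Finset.disjoint_sdiff hb (Or.inl hT), Finset.union_sdiff_of_subset hTU]

theorem card_factorization [DecidableEq ι] (hp : Prime p) (U T : Finset ι) :
    Multiset.card (F.factorization hp U T) = (U \ T).card + 1 := by
  rw [factorization, Multiset.card_cons, Multiset.card_map, Finset.card_val]

variable [IsDomain D]

theorem natDegree_elt (hp : Prime p) (T : Finset ι) :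
    (F.elt hp T : K[X]).natDegree = ∑ i ∈ T, (F.poly i).natDegree := by
  have hinj := IsFractionRing.injective D K
  rw [coe_elt, natDegree_C_mul (F.scale_ne_zero hp T), natDegree_map_eq_of_injective hinj,
    natDegree_prod]
  intro i _ h0
  exact (F.irreducible_map i).ne_zero (by rw [h0, Polynomial.map_zero])

theorem eq_empty_of_isUnit_elt (hp : Prime p) {T : Finset ι} (h : IsUnit (F.elt hp T)) :
    T = ∅ := by
  have h0 := natDegree_eq_zero_of_isUnit_intPoly h
  rw [natDegree_elt, Finset.sum_eq_zero_iff] at h0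
  exact Finset.eq_empty_of_forall_notMem fun i hi => (F.natDegree_poly_pos i).ne' (h0 i hi)

theorem minimal_of_irreducible_elt (hp : Prime p) (he : 0 < e) {T : Finset ι}
    (hT : F.Full T) (h : Irreducible (F.elt hp T)) : Minimal F.Full T := by
  classical
  refine ⟨hT, fun S hS hST => ?_⟩
  have hprod : F.elt hp T = F.elt hp S * F.elt hp (T \ S) := by
    rw [F.elt_mul_elt hp he Finset.disjoint_sdiff (by simp [hS.base_mem hp he]) (Or.inl hS),
      Finset.union_sdiff_of_subset hST]
  rcases h.isUnit_or_isUnit hprod with h | h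
  · have := hS.base_mem hp he
    simp [F.eq_empty_of_isUnit_elt hp h] at this
  · exact Finset.sdiff_eq_empty_iff_subset.1 (F.eq_empty_of_isUnit_elt hp h)

theorem eq_singleton_of_irreducible_elt (hp : Prime p) (he : 0 < e) {T : Finset ι}
    (hT : F.base ∉ T) (h : Irreducible (F.elt hp T)) : ∃ i, T = {i} := by
  classical
  obtain ⟨i, hi⟩ : T.Nonempty := by
    by_contra h0
    rw [Finset.not_nonempty_iff_eq_empty.1 h0, F.elt_empty hp he] at h
    exact h.not_isUnit isUnit_one
  have hprod : F.elt hp T = F.elt hp {i} * F.elt hp (T.erase i) := by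
    rw [F.elt_mul_elt hp he (by simp) (fun hb => hT (Finset.mem_of_mem_erase hb))
      (Or.inr fun hb => hT (Finset.mem_singleton.1 hb ▸ hi)), ← Finset.insert_eq, Finset.insert_erase hi]
  refine ⟨i, ?_⟩
  rcases h.isUnit_or_isUnit hprod with h | h
  · exact absurd (F.eq_empty_of_isUnit_elt hp h) (Finset.singleton_ne_empty i)
  · rw [← Finset.insert_erase hi, F.eq_empty_of_isUnit_elt hp h, Finset.insert_empty]

theorem not_rel_factorization [DecidableEq ι] (hp : Prime p) (he : 0 < e)
    (hdeg : Function.Injective fun i => (F.poly i).natDegree) {U T S : Finset ι}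
    (hS : F.Full S) {i : ι} (hiU : i ∈ U) (hiT : i ∉ T) (hiS : i ∈ S) (hib : i ≠ F.base) :
    ¬ Multiset.Rel Associated (F.factorization hp U T) (F.factorization hp U S) := by
  intro hrel
  have hmem : F.elt hp {i} ∈ F.factorization hp U T :=
    Multiset.mem_cons_of_mem (Multiset.mem_map_of_mem (fun i => F.elt hp {i})
      (Finset.mem_sdiff.2 ⟨hiU, hiT⟩))
  obtain ⟨g, hg, hig⟩ := Multiset.exists_mem_of_rel_of_mem hrel hmem
  have hd := natDegree_eq_of_associated_intPoly hig
  rw [natDegree_elt, Finset.sum_singleton] at hd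
  rw [factorization, Multiset.mem_cons, Multiset.mem_map] at hg
  rcases hg with rfl | ⟨j, hj, rfl⟩
  · rw [natDegree_elt, ← Finset.add_sum_erase S _ hiS] at hd
    have hb : F.base ∈ S.erase i := Finset.mem_erase.2 ⟨hib.symm, hS.base_mem hp he⟩
    have := Finset.single_le_sum (f := fun i => (F.poly i).natDegree) (fun _ _ => Nat.zero_le _) hb
    have := F.natDegree_poly_pos F.base
    omega
  · rw [natDegree_elt, Finset.sum_singleton] at hd
    exact (Finset.mem_sdiff.1 hj).2 (hdeg hd ▸ hiS)

variable [UniqueFactorizationMonoid D]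

theorem exists_algebraMap_eq_of_base_notMem (hp : Prime p) {c : K} {T : Finset ι}
    (hT : F.base ∉ T) {g : IntPolySubring D K}
    (hg : (g : K[X]) = C c * (∏ i ∈ T, F.poly i).map (algebraMap D K)) :
    ∃ x, algebraMap D K x = c := by
  obtain ⟨N, hN⟩ := F.exists_eval_zero_dvd T
  exact exists_algebraMap_eq_of_mul_mem hp hN (F.not_dvd_eval_one_of_base_notMem hp hT)
    (F.exists_eval_eq c T hg 0) (F.exists_eval_eq c T hg 1)

theorem exists_algebraMap_eq_of_full (hp : Prime p) {c : K} {T : Finset ι}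
    (hT : F.Full T) {g : IntPolySubring D K}
    (hg : (g : K[X]) = C c * (∏ i ∈ T, F.poly i).map (algebraMap D K)) :
    ∃ x, algebraMap D K x = c * algebraMap D K (p ^ e) := by
  obtain ⟨N, hN⟩ := F.exists_eval_zero_dvd T
  obtain ⟨u, hu⟩ := hT 0
  obtain ⟨w, hw⟩ := hT 1
  have hpw : ¬ p ∣ w := by
    intro h
    refine F.not_pow_dvd_eval_one_prod hp T ?_
    rw [hw, pow_succ]
    exact mul_dvd_mul_left _ h
  refine exists_algebraMap_eq_of_mul_mem hp (u := u) (w := w) (N := N) ?_ hpw ?_ ?_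
  · exact (Dvd.intro_left _ hu.symm).trans hN
  · simpa only [hu, map_mul, mul_assoc] using F.exists_eval_eq c T hg 0
  · simpa only [hw, map_mul, mul_assoc] using F.exists_eval_eq c T hg 1

theorem full_or_of_eq_C_mul [DecidableEq ι] (hp : Prime p) (he : 0 < e) {T V : Finset ι}
    (hTV : F.Full (T ∪ V) ∨ F.base ∉ T ∪ V) (hV : F.base ∉ V) {b c : K}
    (hbc : b * c = F.scale (T ∪ V)) {g h : IntPolySubring D K}
    (hg : (g : K[X]) = C b * (∏ i ∈ T, F.poly i).map (algebraMap D K))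
    (hh : (h : K[X]) = C c * (∏ i ∈ V, F.poly i).map (algebraMap D K)) :
    (F.Full T ∨ F.base ∉ T) ∧ Associated g (F.elt hp T) ∧ Associated h (F.elt hp V) := by
  have hinj := IsFractionRing.injective D K
  have h0 : algebraMap D K (p ^ e) ≠ 0 := by simp [hp.ne_zero]
  obtain ⟨y, rfl⟩ := F.exists_algebraMap_eq_of_base_notMem hp hV hh
  have hscV := F.scale_of_not_full (F.not_full_of_base_notMem hp he hV)
  have finish (hT : F.Full T ∨ F.base ∉ T) (x : D) (hx : b = algebraMap D K x * F.scale T)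
      (hxy : x * y = 1) :
      (F.Full T ∨ F.base ∉ T) ∧ Associated g (F.elt hp T) ∧ Associated h (F.elt hp V) := by
    refine ⟨hT, associated_intPoly_of_eq_C_mul hxy ?_,
      associated_intPoly_of_eq_C_mul ((mul_comm y x).trans hxy) ?_⟩
    · rw [coe_elt, hg, hx, C_mul, mul_assoc]
    · rw [coe_elt, hh, hscV, C_1, one_mul]
  rcases hTV with hU | hU
  · rw [F.scale_of_full hU] at hbc
    have hT : F.Full T := by
      intro a
      obtain ⟨z, hz⟩ := F.exists_eval_eq b T hg a
      refine ⟨z * y, hinj ?_⟩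
      rw [map_mul, map_mul, hz, mul_right_comm, hbc, mul_inv_cancel_left₀ h0]
    obtain ⟨x, hx⟩ := F.exists_algebraMap_eq_of_full hp hT hg
    refine finish (Or.inl hT) x ?_ (hinj ?_)
    · rw [hx, F.scale_of_full hT, mul_inv_cancel_right₀ h0]
    · rw [map_mul, hx, mul_right_comm, hbc, inv_mul_cancel₀ h0, map_one]
  · have hT : F.base ∉ T := fun h => hU (Finset.mem_union_left _ h)
    rw [F.scale_of_not_full (F.not_full_of_base_notMem hp he hU)] at hbc
    obtain ⟨x, rfl⟩ := F.exists_algebraMap_eq_of_base_notMem hp hT hg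
    refine finish (Or.inr hT) x ?_ (hinj ?_)
    · rw [F.scale_of_not_full (F.not_full_of_base_notMem hp he hT), mul_one]
    · rw [map_mul, hbc, map_one]

/-- Every factorization of `F.elt hp U` into two factors comes from a splitting of `U`. -/
theorem exists_of_mul_eq_elt [DecidableEq ι] (hp : Prime p) (he : 0 < e) {U : Finset ι}
    (hU : F.Full U ∨ F.base ∉ U) {g h : IntPolySubring D K} (hgh : g * h = F.elt hp U) :
    ∃ T V, T ∪ V = U ∧ Disjoint T V ∧ (F.Full T ∨ F.base ∉ T) ∧ (F.Full V ∨ F.base ∉ V) ∧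
      Associated g (F.elt hp T) ∧ Associated h (F.elt hp V) := by
  have hcoe : (g : K[X]) * h =
      C (F.scale U) * ∏ i ∈ U, (F.poly i).map (algebraMap D K) := by
    rw [← Polynomial.map_prod, ← coe_elt F hp, ← hgh, Subring.coe_mul]
  obtain ⟨T, V, b, c, rfl, hdis, hbc, hg, hh⟩ :=
    mul_eq_mul_prime_prod (fun i _ => (F.irreducible_map i).prime) hcoe
  have hu : IsUnit (b * c) := by
    rw [← hbc]; exact isUnit_C.2 (isUnit_iff_ne_zero.2 (F.scale_ne_zero hp _))
  obtain ⟨b, -, rfl⟩ := Polynomial.isUnit_iff.1 (isUnit_of_mul_isUnit_left hu)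
  obtain ⟨c, -, rfl⟩ := Polynomial.isUnit_iff.1 (isUnit_of_mul_isUnit_right hu)
  rw [← C_mul] at hbc
  replace hbc := (C_injective hbc).symm
  rw [← Polynomial.map_prod] at hg hh
  by_cases hV : F.base ∈ V
  · have hT : F.base ∉ T := fun h => Finset.disjoint_left.1 hdis h hV
    have := F.full_or_of_eq_C_mul hp he (T := V) (V := T) (by rwa [Finset.union_comm]) hT
      (by rw [mul_comm, Finset.union_comm, hbc]) hh hg
    exact ⟨T, V, rfl, hdis, Or.inr hT, this.1, this.2.2, this.2.1⟩
  · have := F.full_or_of_eq_C_mul hp he hU hV hbc hg hh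
    exact ⟨T, V, rfl, hdis, this.1, Or.inr hV, this.2.1, this.2.2⟩

theorem irreducible_elt_singleton (hp : Prime p) (he : 0 < e) {i : ι} (hi : i ≠ F.base) :
    Irreducible (F.elt hp {i}) := by
  classical
  refine ⟨fun h => Finset.singleton_ne_empty i (F.eq_empty_of_isUnit_elt hp h), fun g h hgh => ?_⟩
  obtain ⟨T, V, hTV, hdis, -, -, hg, hh⟩ := F.exists_of_mul_eq_elt hp he
    (Or.inr (by simpa using hi.symm)) hgh.symm
  have hT : T = ∅ ∨ T = {i} := Finset.subset_singleton_iff.1 (hTV ▸ Finset.subset_union_left)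
  have hV : V = ∅ ∨ V = {i} := Finset.subset_singleton_iff.1 (hTV ▸ Finset.subset_union_right)
  rcases hT with rfl | rfl
  · rw [F.elt_empty hp he] at hg
    exact Or.inl (associated_one_iff_isUnit.1 hg)
  · rcases hV with rfl | rfl
    · rw [F.elt_empty hp he] at hh
      exact Or.inr (associated_one_iff_isUnit.1 hh)
    · simp at hdis

theorem irreducible_elt_of_minimal (hp : Prime p) (he : 0 < e) {U : Finset ι}
    (hU : Minimal F.Full U) : Irreducible (F.elt hp U) := by
  classical
  refine ⟨fun h => ?_, fun g h hgh => ?_⟩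
  · have := hU.prop.base_mem hp he
    simp [F.eq_empty_of_isUnit_elt hp h] at this
  obtain ⟨T, V, hTV, hdis, hT, hV, hg, hh⟩ := F.exists_of_mul_eq_elt hp he
    (Or.inl hU.prop) hgh.symm
  have hb := hU.prop.base_mem hp he
  rw [← hTV, Finset.mem_union] at hb
  rcases hb with hb | hb
  · have hTU : U ⊆ T := hU.le_of_le (hT.resolve_right (not_not.2 hb))
      (hTV ▸ Finset.subset_union_left)
    have hV0 : V = ∅ := Finset.disjoint_self_iff_empty V |>.1
      (hdis.mono_left ((hTV ▸ Finset.subset_union_right : V ⊆ U).trans hTU))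
    rw [hV0, F.elt_empty hp he] at hh
    exact Or.inr (associated_one_iff_isUnit.1 hh)
  · have hVU : U ⊆ V := hU.le_of_le (hV.resolve_right (not_not.2 hb))
      (hTV ▸ Finset.subset_union_right)
    have hT0 : T = ∅ := Finset.disjoint_self_iff_empty T |>.1
      (hdis.mono_right ((hTV ▸ Finset.subset_union_left : T ⊆ U).trans hVU))
    rw [hT0, F.elt_empty hp he] at hg
    exact Or.inl (associated_one_iff_isUnit.1 hg)

theorem irreducible_of_mem_factorization [DecidableEq ι] (hp : Prime p) (he : 0 < e)
    {U T : Finset ι} (hT : Minimal F.Full T) {g : IntPolySubring D K}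
    (hg : g ∈ F.factorization hp U T) : Irreducible g := by
  rw [factorization, Multiset.mem_cons, Multiset.mem_map] at hg
  rcases hg with rfl | ⟨i, hi, rfl⟩
  · exact F.irreducible_elt_of_minimal hp he hT
  · refine F.irreducible_elt_singleton hp he ?_
    rintro rfl
    exact (Finset.mem_sdiff.1 hi).2 (hT.prop.base_mem hp he)

/-- Irreducibles whose product is `F.elt hp U` correspond, up to associates, to singletons and, when
`U` is full, to one minimal full set. -/
theorem rel_of_prod_associated_elt [DecidableEq ι] (hp : Prime p) (he : 0 < e)
    (s : Multiset (IntPolySubring D K)) (hs : ∀ g ∈ s, Irreducible g) (U : Finset ι)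
    (hU : F.Full U ∨ F.base ∉ U) (hprod : Associated s.prod (F.elt hp U)) :
    (F.base ∉ U → Multiset.Rel Associated s (U.val.map fun i => F.elt hp {i})) ∧
    (F.Full U → ∃ T ⊆ U, Minimal F.Full T ∧
      Multiset.Rel Associated s (F.factorization hp U T)) := by
  induction s using Multiset.induction generalizing U with
  | empty =>
    rw [Multiset.prod_zero] at hprod
    obtain rfl : U = ∅ :=
      F.eq_empty_of_isUnit_elt hp (associated_one_iff_isUnit.1 hprod.symm)
    exact ⟨fun _ => by simp, fun h => absurd (h.base_mem hp he) (by simp)⟩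
  | cons g s ih =>
    obtain ⟨w, hw⟩ := hprod
    rw [Multiset.prod_cons, mul_assoc] at hw
    obtain ⟨T, V, rfl, hdis, hT, hV, hg, hsw⟩ := F.exists_of_mul_eq_elt hp he hU hw
    have hsV : Associated s.prod (F.elt hp V) :=
      (associated_mul_unit_right s.prod _ w.isUnit).trans hsw
    have ih' := ih (fun x hx => hs x (Multiset.mem_cons_of_mem hx)) V hV hsV
    have hirr : Irreducible (F.elt hp T) := hg.irreducible (hs g (Multiset.mem_cons_self _ _))
    refine ⟨fun hb => ?_, fun hfull => ?_⟩
    · rw [Finset.mem_union, not_or] at hb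
      obtain ⟨i, rfl⟩ := F.eq_singleton_of_irreducible_elt hp he hb.1 hirr
      rw [← Finset.insert_eq, Finset.insert_val_of_notMem (by simpa using hdis), Multiset.map_cons]
      exact Multiset.Rel.cons hg (ih'.1 hb.2)
    · rcases hT with hT | hT
      · have hbV : F.base ∉ V := Finset.disjoint_left.1 hdis (hT.base_mem hp he)
        refine ⟨T, Finset.subset_union_left, F.minimal_of_irreducible_elt hp he hT hirr, ?_⟩
        rw [factorization, Finset.union_sdiff_cancel_left hdis]
        exact Multiset.Rel.cons hg (ih'.1 hbV)
      · obtain ⟨i, rfl⟩ := F.eq_singleton_of_irreducible_elt hp he hT hirr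
        have hbV : F.base ∈ V := (Finset.mem_union.1 (hfull.base_mem hp he)).resolve_left hT
        obtain ⟨T', hT'V, hmin, hrel⟩ := ih'.2 (hV.resolve_right (not_not.2 hbV))
        have hiV : i ∉ V := by simpa using hdis
        refine ⟨T', hT'V.trans Finset.subset_union_right, hmin, ?_⟩
        rw [factorization, ← Finset.insert_eq,
          Finset.insert_sdiff_of_notMem _ (fun h => hiV (hT'V h)),
          Finset.insert_val_of_notMem (fun h => hiV (Finset.mem_sdiff.1 h).1), Multiset.map_cons,
          Multiset.cons_swap]
        exact Multiset.Rel.cons hg hrel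

end PrimeValueFamily

section Weights

theorem Finset.sum_range_two_pow_add_one (r : ℕ) : ∑ t ∈ Finset.range r, 2 ^ t + 1 = 2 ^ r := by
  induction r with
  | zero => simp
  | succ r ih => rw [Finset.sum_range_succ, pow_succ]; omega

theorem Fin.sum_ite_lt {R r : ℕ} (hr : r ≤ R) (h : ℕ → ℕ) :
    ∑ t : Fin R, (if (t : ℕ) < r then h t else 0) = ∑ t ∈ Finset.range r, h t := by
  rw [Fin.sum_univ_eq_sum_range (fun t => if t < r then h t else 0) R, ← Finset.sum_filter]
  congr 1
  ext t
  simp only [Finset.mem_filter, Finset.mem_range]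
  omega

/-- There are positive weights on a finite set and a threshold `e` such that the minimal sets of
weight at least `e` are `k` sets whose complements have prescribed positive sizes. -/
theorem exists_weights {k : ℕ} (hk : 0 < k) (n : Fin k → ℕ) (hn : ∀ i, 1 < n i)
    (hmono : Monotone n) :
    ∃ (J : Type) (_ : Fintype J) (_ : DecidableEq J) (d : J → ℕ) (e : ℕ)
      (T : Fin k → Finset J) (x : Fin k → J),
      (∀ j, 0 < d j) ∧ 0 < e ∧ (∀ S : Finset J, e ≤ ∑ j ∈ S, d j ↔ ∃ i, T i ⊆ S) ∧
      (∀ i, (T i)ᶜ.card + 1 = n i) ∧ ∀ i j, x i ∈ T j ↔ i ≠ j := by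
  classical
  let last : Fin k := ⟨k - 1, by omega⟩
  have hlast (i : Fin k) : n i ≤ n last := hmono (Fin.le_def.2 (by simp only [last]; omega))
  let R := n last - 2
  have hR (i : Fin k) : n i - 2 ≤ R := Nat.sub_le_sub_right (hlast i) 2
  have hpow (i : Fin k) : 2 ^ (n i - 2) ≤ 2 ^ R := Nat.pow_le_pow_right two_pos (hR i)
  let c := 2 ^ (R + 1)
  have hc : c = 2 * 2 ^ R := by simp only [c, pow_succ, mul_comm]
  have hRpos : 0 < 2 ^ R := by positivity
  let J := Option (Fin k ⊕ Fin R)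
  let d : J → ℕ := fun
    | none => c + 1
    | some (Sum.inl i) => c + 1 - 2 ^ (n i - 2)
    | some (Sum.inr t) => 2 ^ (t : ℕ)
  let M : Fin k → J → Prop := fun i => fun
    | none => False
    | some (Sum.inl j) => j = i
    | some (Sum.inr t) => (t : ℕ) < n i - 2
  let A : Fin k → Finset J := fun i => Finset.univ.filter (M i)
  have sumA (i : Fin k) (w : J → ℕ) (h : ℕ → ℕ) (hw : ∀ t : Fin R, w (some (Sum.inr t)) = h t) :
      ∑ j ∈ A i, w j = w (some (Sum.inl i)) + ∑ t ∈ Finset.range (n i - 2), h t := by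
    rw [Finset.sum_filter, Fintype.sum_option, Fintype.sum_sum_type, ← Fin.sum_ite_lt (hR i) h]
    simp only [M, hw, if_false, zero_add, Nat.add_right_cancel_iff]
    exact (Finset.sum_eq_single i (fun j _ hj => if_neg hj) (by simp)).trans (if_pos rfl)
  have hsum (i : Fin k) : ∑ j ∈ A i, d j = c := by
    rw [sumA i d (fun t => 2 ^ t) (fun _ => rfl)]
    have := Finset.sum_range_two_pow_add_one (n i - 2)
    have := hpow i
    simp only [d]
    omega
  have hcard (i : Fin k) : (A i).card + 1 = n i := by
    rw [Finset.card_eq_sum_ones, sumA i (fun _ => 1) (fun _ => 1) (fun _ => rfl)]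
    have := hn i
    simp only [Finset.sum_const, Finset.card_range, smul_eq_mul, mul_one]
    omega
  have hfeas (W : Finset J) : ∑ j ∈ W, d j ≤ c ↔ ∃ i, W ⊆ A i := by
    refine ⟨fun hW => ?_, fun ⟨i, hi⟩ => (Finset.sum_le_sum_of_subset hi).trans (hsum i).le⟩
    have hsingle {j : J} (hj : j ∈ W) : d j ≤ c :=
      (Finset.single_le_sum (f := d) (fun _ _ => Nat.zero_le _) hj).trans hW
    have hpair {i j : J} (hi : i ∈ W) (hj : j ∈ W) (hij : i ≠ j) : d i + d j ≤ c := by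
      rw [← Finset.sum_pair hij]
      exact (Finset.sum_le_sum_of_subset (by
        intro a ha
        rcases Finset.mem_insert.1 ha with rfl | ha
        · exact hi
        · rwa [Finset.mem_singleton.1 ha])).trans hW
    have hnone : (none : J) ∉ W := fun h => absurd (hsingle h) (by simp [d])
    by_cases hx : ∃ i, (some (Sum.inl i) : J) ∈ W
    · obtain ⟨i, hi⟩ := hx
      refine ⟨i, fun j hj => Finset.mem_filter.2 ⟨Finset.mem_univ _, ?_⟩⟩
      have h1 := hpow i
      rcases j with _ | j | t
      · exact hnone hj
      · by_contra hne
        have h2 := hpair hi hj (fun h => hne (Sum.inl_injective (Option.some_injective _ h.symm)))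
        have h3 := hpow j
        simp only [d] at h2
        omega
      · by_contra hlt
        have h2 := hpair hi hj (fun h => Sum.inl_ne_inr (Option.some_injective _ h))
        have h3 : 2 ^ (n i - 2) ≤ 2 ^ (t : ℕ) := Nat.pow_le_pow_right two_pos (not_lt.1 hlt)
        simp only [d] at h2
        omega
    · refine ⟨last, fun j hj => Finset.mem_filter.2 ⟨Finset.mem_univ _, ?_⟩⟩
      rcases j with _ | j | t
      · exact hnone hj
      · exact (hx ⟨j, hj⟩).elim
      · exact t.2
  have htotal : c + 1 ≤ ∑ j, d j :=
    Finset.single_le_sum (f := d) (fun _ _ => Nat.zero_le _) (Finset.mem_univ none)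
  refine ⟨J, inferInstance, inferInstance, d, ∑ j, d j - c, fun i => (A i)ᶜ,
    fun i => some (Sum.inl i), ?_, by omega, fun S => ?_, fun i => ?_, fun i j => ?_⟩
  · rintro (_ | i | t)
    · exact Nat.succ_pos _
    · have := hpow i
      simp only [d]
      omega
    · exact pow_pos two_pos _
  · have h1 := hfeas Sᶜ
    have h2 := Finset.sum_add_sum_compl S d
    have h3 : (∑ j, d j - c ≤ ∑ j ∈ S, d j) ↔ ∑ j ∈ Sᶜ, d j ≤ c := by omega
    rw [h3, h1]
    exact exists_congr fun i => compl_le_iff_compl_le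
  · rw [compl_compl, hcard]
  · simp [A, M]

theorem exists_injective_prime_gt {ι : Type*} [Finite ι] (N : ℕ) :
    ∃ m : ι → ℕ, Function.Injective m ∧ ∀ i, (m i).Prime ∧ N < m i := by
  obtain ⟨l, ⟨φ⟩⟩ := Finite.exists_equiv_fin ι
  refine ⟨fun i => Nat.nth Nat.Prime (N + φ i), fun i j hij => ?_, fun i => ⟨?_, ?_⟩⟩
  · exact φ.injective (Fin.ext (Nat.add_left_cancel
      (Nat.nth_injective Nat.infinite_setOfPred_prime hij)))
  · exact Nat.prime_nth_prime _
  · have := Nat.add_two_le_nth_prime (N + φ i)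
    change N < Nat.nth Nat.Prime (N + φ i)
    omega

end Weights

section Construction

variable {D : Type*} [CommRing D] {p : D}

theorem pow_dvd_pow_add_prime_pow {b : D} {m d : ℕ} (hb : p ∣ b) (hdm : d < m) :
    p ^ d ∣ b ^ m + p ^ d :=
  dvd_add ((pow_dvd_pow p hdm.le).trans (pow_dvd_pow_of_dvd hb m)) dvd_rfl

theorem not_dvd_pow_add_prime_pow_mul (hp : Prime p) {b c : D} {m d : ℕ} (hb : ¬ p ∣ b)
    (hd : 0 < d) : ¬ p ∣ b ^ m + p ^ d * c := fun h =>
  hb (hp.dvd_of_dvd_pow ((dvd_add_left ((dvd_pow_self p hd.ne').mul_right c)).1 h))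

theorem not_pow_succ_dvd_pow_add_prime_pow [IsDomain D] (hp : Prime p) {b : D} {m d : ℕ}
    (hb : p ∣ b) (hdm : d < m) : ¬ p ^ (d + 1) ∣ b ^ m + p ^ d := fun h => by
  rw [dvd_add_right ((pow_dvd_pow p hdm).trans (pow_dvd_pow_of_dvd hb m)),
    pow_dvd_pow_iff hp.ne_zero hp.not_isUnit] at h
  omega

theorem mk_eq_one_iff_dvd_one_sub {b : D} :
    Ideal.Quotient.mk (Ideal.span {p}) b = 1 ↔ p ∣ 1 - b := by
  rw [eq_comm, ← map_one (Ideal.Quotient.mk (Ideal.span {p})), Ideal.Quotient.eq,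
    Ideal.mem_span_singleton]

theorem mk_eq_zero_iff_dvd {b : D} : Ideal.Quotient.mk (Ideal.span {p}) b = 0 ↔ p ∣ b := by
  rw [Ideal.Quotient.eq_zero_iff_mem, Ideal.mem_span_singleton]

variable (p) in
/-- The nonzero residue classes modulo `p`. -/
abbrev NonzeroResidue : Type _ := {a : D ⧸ Ideal.span {p} // a ≠ 0}

/-- A representative of a nonzero residue class. -/
noncomputable def NonzeroResidue.rep (a : NonzeroResidue p) : D :=
  (Ideal.Quotient.mk_surjective a.1).choose

theorem NonzeroResidue.mk_rep (a : NonzeroResidue p) :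
    Ideal.Quotient.mk (Ideal.span {p}) a.rep = a.1 :=
  (Ideal.Quotient.mk_surjective a.1).choose_spec

theorem NonzeroResidue.not_dvd_rep (a : NonzeroResidue p) : ¬ p ∣ a.rep := by
  rw [← mk_eq_zero_iff_dvd, a.mk_rep]
  exact a.2

theorem NonzeroResidue.dvd_one_sub_rep_mul_iff (a : NonzeroResidue p) {b : D} :
    p ∣ 1 - a.rep * b ↔ a.1 * Ideal.Quotient.mk (Ideal.span {p}) b = 1 := by
  rw [← mk_eq_one_iff_dvd_one_sub, map_mul, a.mk_rep]

/-- The polynomials `(1 - a X) ^ m + p ^ e X ^ m`, one for each nonzero residue class, and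
`X ^ m + p ^ d`. -/
noncomputable def residuePoly (p : D) {J : Type*} (d : J → ℕ) (e : ℕ)
    (m : NonzeroResidue p ⊕ J → ℕ) : NonzeroResidue p ⊕ J → D[X]
  | Sum.inl a => (1 - C a.rep * X) ^ m (Sum.inl a) + C (p ^ e) * X ^ m (Sum.inl a)
  | Sum.inr j => X ^ m (Sum.inr j) + C (p ^ d j)

variable {J : Type*} {d : J → ℕ} {e : ℕ} {m : NonzeroResidue p ⊕ J → ℕ}

theorem eval_residuePoly_inl (a : NonzeroResidue p) (b : D) :
    (residuePoly p d e m (Sum.inl a)).eval b =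
      (1 - a.rep * b) ^ m (Sum.inl a) + p ^ e * b ^ m (Sum.inl a) := by
  simp [residuePoly]

theorem eval_residuePoly_inr (j : J) (b : D) :
    (residuePoly p d e m (Sum.inr j)).eval b = b ^ m (Sum.inr j) + p ^ d j := by
  simp [residuePoly]

theorem eval_zero_prod_residuePoly (hm : ∀ i, m i ≠ 0) (T : Finset (NonzeroResidue p ⊕ J)) :
    (∏ i ∈ T, residuePoly p d e m i).eval 0 = p ^ ∑ j ∈ T.toRight, d j := by
  rw [eval_prod, ← T.toLeft_disjSum_toRight, Finset.prod_disjSum, ← Finset.prod_pow_eq_pow_sum]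
  simp [eval_residuePoly_inl, eval_residuePoly_inr, hm]

theorem exists_nonzeroResidue_mul_eq_one (hp : Prime p) [Finite (D ⧸ Ideal.span {p})] {b : D}
    (hb : ¬ p ∣ b) :
    ∃ a : NonzeroResidue p, a.1 * Ideal.Quotient.mk (Ideal.span {p}) b = 1 := by
  have hprime : (Ideal.span {p}).IsPrime := (Ideal.span_singleton_prime hp.ne_zero).2 hp
  obtain ⟨y, hy⟩ := (Finite.isField_of_domain (D ⧸ Ideal.span {p})).mul_inv_cancel
    (mt mk_eq_zero_iff_dvd.1 hb)
  refine ⟨⟨y, ?_⟩, by rwa [mul_comm]⟩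
  rintro rfl
  simp at hy

variable [IsDomain D]

theorem natDegree_residuePoly (hp : Prime p) (he : 0 < e) (i : NonzeroResidue p ⊕ J) :
    (residuePoly p d e m i).natDegree = m i := by
  rcases i with a | j
  · exact natDegree_one_sub_C_mul_X_pow_add hp he a.not_dvd_rep
  · exact natDegree_X_pow_add_C

theorem forall_pow_dvd_eval_prod_residuePoly_iff (hp : Prime p) [Finite (D ⧸ Ideal.span {p})]
    (he : 0 < e) (hd : ∀ j, 0 < d j) (hem : ∀ i, e < m i) (hdm : ∀ j, d j < m (Sum.inr j))
    (T : Finset (NonzeroResidue p ⊕ J)) :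
    (∀ b, p ^ e ∣ (∏ i ∈ T, residuePoly p d e m i).eval b) ↔
      (∀ a, Sum.inl a ∈ T) ∧ e ≤ ∑ j ∈ T.toRight, d j := by
  have hprime : (Ideal.span {p}).IsPrime := (Ideal.span_singleton_prime hp.ne_zero).2 hp
  refine ⟨fun h => ⟨fun a => ?_, ?_⟩, fun ⟨hA, hJ⟩ b => ?_⟩
  · obtain ⟨y, hy⟩ := (Finite.isField_of_domain (D ⧸ Ideal.span {p})).mul_inv_cancel a.2
    obtain ⟨b, rfl⟩ := Ideal.Quotient.mk_surjective y
    have hb : ¬ p ∣ b := fun hb => by simp [mk_eq_zero_iff_dvd.2 hb] at hy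
    have hpb := (dvd_pow_self p he.ne').trans (h b)
    rw [eval_prod, hp.dvd_finsetProd_iff] at hpb
    obtain ⟨i | j, hi, hdvd⟩ := hpb
    · rw [eval_residuePoly_inl] at hdvd
      have h1 : p ∣ 1 - i.rep * b := by
        by_contra hn
        exact not_dvd_pow_add_prime_pow_mul hp hn he hdvd
      rw [i.dvd_one_sub_rep_mul_iff] at h1
      have : i = a := Subtype.ext (left_inv_eq_right_inv h1 ((mul_comm _ _).trans hy))
      rwa [← this]
    · rw [eval_residuePoly_inr, ← mul_one (p ^ d j)] at hdvd
      exact absurd hdvd (not_dvd_pow_add_prime_pow_mul hp hb (hd j))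
  · have h0 := h 0
    rwa [eval_zero_prod_residuePoly (fun i => (hem i).ne_bot),
      pow_dvd_pow_iff hp.ne_zero hp.not_isUnit] at h0
  · rw [eval_prod]
    by_cases hb : p ∣ b
    · rw [← T.toLeft_disjSum_toRight, Finset.prod_disjSum]
      refine Dvd.dvd.mul_left ((pow_dvd_pow p hJ).trans ?_) _
      rw [← Finset.prod_pow_eq_pow_sum]
      refine Finset.prod_dvd_prod_of_dvd _ _ fun j _ => ?_
      rw [eval_residuePoly_inr]
      exact pow_dvd_pow_add_prime_pow hb (hdm j)
    · obtain ⟨a, ha⟩ := exists_nonzeroResidue_mul_eq_one hp hb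
      refine Dvd.dvd.trans ?_ (Finset.dvd_prod_of_mem _ (hA a))
      rw [eval_residuePoly_inl]
      rw [← a.dvd_one_sub_rep_mul_iff] at ha
      exact dvd_add ((pow_dvd_pow p (hem _).le).trans (pow_dvd_pow_of_dvd ha _)) (dvd_mul_right _ _)

variable [UniqueFactorizationMonoid D] (K : Type*) [Field K] [Algebra D K] [IsFractionRing D K]

/-- The polynomials `residuePoly` form a `PrimeValueFamily` based at the residue class of `1`. -/
noncomputable def residueFamily (hp : Prime p) (he : 0 < e) (hd : ∀ j, 0 < d j)
    (hm : ∀ i, (m i).Prime) (hem : ∀ i, e < m i) (hdm : ∀ j, d j < m (Sum.inr j)) :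
    PrimeValueFamily D K p e (NonzeroResidue p ⊕ J) where
  poly := residuePoly p d e m
  base := Sum.inl ⟨1, fun h => hp.not_isUnit (isUnit_of_dvd_one
    (mk_eq_zero_iff_dvd.1 ((map_one _).trans h)))⟩
  irreducible_map := by
    rintro (a | j)
    · exact irreducible_one_sub_C_mul_X_pow_add hp (hm _) he (hem _) a.not_dvd_rep
    · simpa [residuePoly] using
        irreducible_X_pow_add_C_prime_pow (K := K) hp (hm (Sum.inr j)) (hd j) (hdm j)
  eval_zero_dvd i := by
    have h := eval_zero_prod_residuePoly (d := d) (e := e) (fun i => (hm i).ne_zero) {i}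
    rw [Finset.prod_singleton] at h
    exact ⟨_, h.dvd⟩
  not_dvd_eval_one := by
    rintro (a | j) hne
    · rw [eval_residuePoly_inl]
      refine not_dvd_pow_add_prime_pow_mul hp (fun h => hne ?_) he
      rw [a.dvd_one_sub_rep_mul_iff, map_one, mul_one] at h
      exact congrArg Sum.inl (Subtype.ext h)
    · rw [eval_residuePoly_inr, ← mul_one (p ^ d j)]
      exact not_dvd_pow_add_prime_pow_mul hp (fun h => hp.not_isUnit (isUnit_of_dvd_one h)) (hd j)
  not_pow_dvd_eval_one := by
    rw [eval_residuePoly_inl, one_pow, mul_one (p ^ e)]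
    refine not_pow_succ_dvd_pow_add_prime_pow hp ?_ (hem _)
    rw [NonzeroResidue.dvd_one_sub_rep_mul_iff]
    simp

/-- Integer-valued polynomials with prescribed lengths of factorizations. -/
theorem exists_intPoly_factorizations (hp : Prime p) [Finite (D ⧸ Ideal.span {p})] {k : ℕ}
    (hk : 0 < k) (n : Fin k → ℕ) (hn : ∀ i, 1 < n i) (hmono : Monotone n) :
    ∃ H : IntPolySubring D K, ∃ L : Fin k → Multiset (IntPolySubring D K),
      (∀ i, ∀ g ∈ L i, Irreducible g) ∧ (∀ i, (L i).prod = H) ∧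
      (∀ i, Multiset.card (L i) = n i) ∧
      (∀ i j, i ≠ j → ¬ Multiset.Rel Associated (L i) (L j)) ∧
      (∀ s : Multiset (IntPolySubring D K), (∀ g ∈ s, Irreducible g) → s.prod = H →
        ∃ i, Multiset.Rel Associated s (L i)) := by
  classical
  obtain ⟨J, _, _, d, e, T, x, hd, he, hT, hcard, hx⟩ := exists_weights hk n hn hmono
  have : Fintype (NonzeroResidue p) := Fintype.ofFinite _
  obtain ⟨m, hminj, hm⟩ := exists_injective_prime_gt (ι := NonzeroResidue p ⊕ J) (e + ∑ j, d j)
  have hem (i) : e < m i := (Nat.le_add_right _ _).trans_lt (hm i).2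
  have hdm (j) : d j < m (Sum.inr j) :=
    ((Finset.single_le_sum (f := d) (fun _ _ => Nat.zero_le _) (Finset.mem_univ j)).trans
      (Nat.le_add_left _ _)).trans_lt (hm _).2
  let F := residueFamily K hp he hd (fun i => (hm i).1) hem hdm
  let T' : Fin k → Finset (NonzeroResidue p ⊕ J) := fun i => Finset.univ.disjSum (T i)
  have hFull (S : Finset (NonzeroResidue p ⊕ J)) : F.Full S ↔ ∃ i, T' i ⊆ S := by
    refine (forall_pow_dvd_eval_prod_residuePoly_iff hp he hd hem hdm S).trans ?_
    rw [hT, ← exists_and_left]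
    refine exists_congr fun i => ⟨fun ⟨hA, hJ⟩ => ?_, fun h => ⟨fun a => h (by simp [T']), ?_⟩⟩
    · rintro (a | j) hj
      · exact hA a
      · exact Finset.mem_toRight.1 (hJ (by simpa [T'] using hj))
    · exact fun j hj => Finset.mem_toRight.2 (h (by simpa [T'] using hj))
  have hxT (i j : Fin k) : Sum.inr (x i) ∈ T' j ↔ i ≠ j := by simp [T', hx]
  have hmin (i : Fin k) : Minimal F.Full (T' i) := by
    refine ⟨(hFull _).2 ⟨i, subset_rfl⟩, fun S hS hSi => ?_⟩
    obtain ⟨j, hj⟩ := (hFull S).1 hS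
    obtain rfl : i = j := by
      by_contra hij
      exact (hxT i i).1 (hSi (hj ((hxT i j).2 hij))) rfl
    exact hj
  refine ⟨F.elt hp Finset.univ, fun i => F.factorization hp Finset.univ (T' i), fun i g hg =>
    F.irreducible_of_mem_factorization hp he (hmin i) hg, fun i =>
    F.prod_factorization hp he (hmin i).prop (Finset.subset_univ _), fun i => ?_,
    fun i j hij => ?_, fun s hs hprod => ?_⟩
  · have h1 := hcard i
    have h2 := (T i).card_le_univ
    rw [F.card_factorization, ← Finset.compl_eq_univ_sdiff, Finset.card_compl]
    rw [Finset.card_compl] at h1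
    simp only [T', Finset.card_disjSum, Fintype.card_sum, Finset.card_univ]
    omega
  · refine F.not_rel_factorization hp he (fun a b hab => hminj ?_) (hmin j).prop
      (Finset.mem_univ (Sum.inr (x i))) (fun h => (hxT i i).1 h rfl) ((hxT i j).2 hij)
      Sum.inr_ne_inl
    simpa only [F, residueFamily, natDegree_residuePoly hp he] using hab
  · have huniv : F.Full Finset.univ := (hmin ⟨0, hk⟩).prop.mono (Finset.subset_univ _)
    obtain ⟨S, -, hS, hrel⟩ := (F.rel_of_prod_associated_elt hp he s hs Finset.univ
      (Or.inl huniv) (by rw [hprod])).2 huniv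
    obtain ⟨i, hi⟩ := (hFull S).1 hS.prop
    obtain rfl : S = T' i := (hS.le_of_le (hmin i).prop hi).antisymm hi
    exact ⟨i, hrel⟩

end Construction

/-- For a UFD `D` with a prime element `p` such that `D/pD` is finite, `Int(D)` is not a
UFD; indeed for all `1 < n_1 ≤ … ≤ n_k` there is `H ∈ Int(D)` with exactly `k` essentially
different factorizations into irreducibles of `Int(D)`, of lengths exactly `n_1, …, n_k`. -/
theorem stmt13 (D : Type*) [CommRing D] [IsDomain D] [UniqueFactorizationMonoid D]
    (p : D) (hp : Prime p) (hfin : Finite (D ⧸ Ideal.span {p})) :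
    ¬ UniqueFactorizationMonoid (IntPolySubring D (FractionRing D)) ∧
    ∀ (k : ℕ), 0 < k → ∀ n : Fin k → ℕ, (∀ i, 1 < n i) → Monotone n →
    ∃ H : IntPolySubring D (FractionRing D),
      ∃ L : Fin k → Multiset (IntPolySubring D (FractionRing D)),
        (∀ i, ∀ g ∈ L i, Irreducible g) ∧
        (∀ i, (L i).prod = H) ∧
        (∀ i, Multiset.card (L i) = n i) ∧
        (∀ i j, i ≠ j → ¬ Multiset.Rel Associated (L i) (L j)) ∧
        (∀ s : Multiset (IntPolySubring D (FractionRing D)),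
          (∀ g ∈ s, Irreducible g) → s.prod = H →
          ∃ i, Multiset.Rel Associated s (L i)) := by
  have main := fun (k : ℕ) (hk : 0 < k) (n : Fin k → ℕ) (hn : ∀ i, 1 < n i) (hmono : Monotone n) =>
    exists_intPoly_factorizations (FractionRing D) hp hk n hn hmono
  refine ⟨fun hufd => ?_, main⟩
  obtain ⟨H, L, hirr, hprod, -, hne, -⟩ :=
    main 2 two_pos (fun _ => 2) (fun _ => one_lt_two) monotone_const
  exact hne 0 1 zero_ne_one (UniqueFactorizationMonoid.factors_unique (hirr 0) (hirr 1)
    ((hprod 0).trans (hprod 1).symm ▸ Associated.refl _))
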